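/- Let X be a Banach space, 0 < α < 1, T(·) an analytic semigroup generated by -A satisfying ‖T(t)x - T(s)x‖ ≤ C_η (t-s)^η s^{-η} ‖x‖ for 0 < s < t and 0 < η < 1, and let h_α be the probability density with moments ∫₀^∞ θ^γ h_α(θ)dθ = Γ(1+γ)/Γ(1+αγ) for γ > -1. If u₀ ∈ D(A^q) with β/α ≤ q ≤ 1 and β < α, then S₀(t) := ∫₀^∞ h_α(θ) T(t^α θ) u₀ dθ is β-Hölder continuous on [0,T]; in particular ‖S₀(t) - u₀‖ ≤ (C_q Γ(1+q)/Γ(1+αq)) ‖A^q u₀‖ t^{αq} ≤ C t^β. -/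

import Mathlib

open MeasureTheory Set Real

lemma aux_exp_decay (b : ℝ) (hb : 0 < b) (n : ℕ) :
    ∃ C : ℝ, 0 < C ∧ ∀ x : ℝ, Real.exp (-b * |x|) ≤ C / (1 + |x|) ^ n := by
  refine ⟨Real.exp b * n.factorial / b ^ n, by positivity, fun x => ?_⟩
  have h := Real.pow_div_factorial_le_exp (x := b * (1 + |x|)) (by positivity) n
  have hx : 0 < 1 + |x| := by positivity
  rw [div_le_iff₀ (by positivity), mul_pow] at h
  rw [div_div, le_div_iff₀ (by positivity)]
  have e : Real.exp (b * (1 + |x|)) = Real.exp b * Real.exp (b * |x|) := by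
    rw [← Real.exp_add]; ring_nf
  have e2 : Real.exp (-b * |x|) * Real.exp (b * |x|) = 1 := by
    rw [← Real.exp_add]; simp
  rw [e] at h
  calc Real.exp (-b * |x|) * (b ^ n * (1 + |x|) ^ n)
      ≤ Real.exp (-b * |x|) * (Real.exp b * Real.exp (b * |x|) * n.factorial) := by gcongr
    _ = (Real.exp (-b * |x|) * Real.exp (b * |x|)) * (Real.exp b * n.factorial) := by ring
    _ = _ := by rw [e2, one_mul]

lemma aux_integrable : Integrable (fun x : ℝ => 1 / (1 + |x|) ^ 2) := by
  have h := integrable_one_add_norm (E := ℝ) (μ := volume) (r := 2) (by simp)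
  refine h.congr (Filter.Eventually.of_forall fun x => ?_)
  have hx : 0 < 1 + |x| := by positivity
  simp only [Real.norm_eq_abs]
  rw [Real.rpow_neg hx.le, one_div]
  norm_cast

lemma aux_sinh (α y : ℝ) (hα1 : α < 1) (hy : 0 ≤ y) :
    Real.sinh (α * y) ≤ Real.exp (-(1 - α) * y) * Real.sinh y := by
  rw [Real.sinh_eq, Real.sinh_eq]
  have e1 : Real.exp (-(1 - α) * y) * Real.exp y = Real.exp (α * y) := by
    rw [← Real.exp_add]; ring_nf
  have e2 : Real.exp (-(1 - α) * y) * Real.exp (-y) ≤ Real.exp (-(α * y)) := by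
    rw [← Real.exp_add]
    apply Real.exp_le_exp.2
    nlinarith
  linarith [mul_div_assoc (Real.exp (-(1 - α) * y)) (Real.exp y - Real.exp (-y)) 2,
    mul_sub (Real.exp (-(1 - α) * y)) (Real.exp y) (Real.exp (-y))]

lemma aux_gamma_sq (ξ : ℝ) :
    ‖Complex.Gamma (1 + ξ * Complex.I)‖ ^ 2 * Real.sinh (π * ξ) = π * ξ := by
  rcases eq_or_ne ξ 0 with rfl | hξ
  · simp
  have h := Complex.Gamma_mul_Gamma_one_sub (ξ * Complex.I)
  have h1 : Complex.Gamma (1 - ξ * Complex.I) =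
      (starRingEnd ℂ) (Complex.Gamma (1 + ξ * Complex.I)) := by
    rw [← Complex.Gamma_conj]; congr 1; simp [sub_eq_add_neg]
  have hI : (ξ * Complex.I : ℂ) ≠ 0 := by simp [hξ]
  have h2 := Complex.Gamma_add_one (ξ * Complex.I) hI
  rw [add_comm] at h2
  have h3 : Complex.sin (π * (ξ * Complex.I)) = Real.sinh (π * ξ) * Complex.I := by
    rw [← mul_assoc, Complex.sin_mul_I]; push_cast; rfl
  have hs : Real.sinh (π * ξ) ≠ 0 := by
    rw [Ne, Real.sinh_eq_zero]; positivity
  have hs' : (Real.sinh (π * ξ) : ℂ) ≠ 0 := by exact_mod_cast hs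
  have h4 : ((‖Complex.Gamma (1 + ξ * Complex.I)‖ ^ 2 : ℝ) : ℂ) * Real.sinh (π * ξ) = π * ξ := by
    rw [h3, h1] at h
    have h5 := Complex.mul_conj (Complex.Gamma (1 + ξ * Complex.I))
    rw [Complex.normSq_eq_norm_sq] at h5
    rw [← h5]
    nth_rewrite 1 [h2]
    rw [mul_assoc (ξ * Complex.I), h]
    field_simp
  exact_mod_cast h4

lemma aux_ratio0 (α : ℝ) (hα : 0 < α) (hα1 : α < 1) (ξ : ℝ) :
    ‖Complex.Gamma (1 + ξ * Complex.I)‖ ≤ (Real.sqrt α)⁻¹ *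
      Real.exp (-((1 - α) * π / 2) * |ξ|) * ‖Complex.Gamma (1 + (α * ξ : ℝ) * Complex.I)‖ := by
  have key : ‖Complex.Gamma (1 + ξ * Complex.I)‖ ^ 2 * α ≤ 
      Real.exp (-(1 - α) * (π * |ξ|)) * ‖Complex.Gamma (1 + (α * ξ : ℝ) * Complex.I)‖ ^ 2 := by
    rcases eq_or_ne ξ 0 with rfl | hξ
    · simp [hα1.le]
    have h1 := aux_gamma_sq ξ
    have h2 := aux_gamma_sq (α * ξ)
    have ab : ∀ η : ℝ, ‖Complex.Gamma (1 + η * Complex.I)‖ ^ 2 * Real.sinh (π * η) = π * η →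
        ‖Complex.Gamma (1 + η * Complex.I)‖ ^ 2 * Real.sinh (π * |η|) = π * |η| := by
      intro η h
      rcases abs_choice η with h' | h' <;> rw [h']
      · exact h
      · rw [mul_neg, Real.sinh_neg, mul_neg, h]
    have h1 := ab _ h1
    have h2 := ab _ h2
    rw [abs_mul, abs_of_pos hα] at h2
    have hpos : 0 < π * |ξ| := by positivity
    have h3 := aux_sinh α (π * |ξ|) hα1 hpos.le
    have hs1 : 0 < Real.sinh (π * |ξ|) := Real.sinh_pos_iff.2 hpos
    have hs2 : 0 < Real.sinh (π * (α * |ξ|)) := Real.sinh_pos_iff.2 (by positivity)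
    rw [show α * (π * |ξ|) = π * (α * |ξ|) by ring] at h3
    set a := ‖Complex.Gamma (1 + ξ * Complex.I)‖ ^ 2
    set b := ‖Complex.Gamma (1 + (α * ξ : ℝ) * Complex.I)‖ ^ 2
    have hb : 0 ≤ b := by positivity
    have : a * α * Real.sinh (π * |ξ|) ≤ Real.exp (-(1 - α) * (π * |ξ|)) * b * Real.sinh (π * |ξ|) := by
      calc a * α * Real.sinh (π * |ξ|) = b * Real.sinh (π * (α * |ξ|)) := by
            rw [h2, mul_right_comm, h1]; ring
        _ ≤ b * (Real.exp (-(1 - α) * (π * |ξ|)) * Real.sinh (π * |ξ|)) := by gcongr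
        _ = _ := by ring
    exact le_of_mul_le_mul_right this hs1
  apply le_of_sq_le_sq _ (by positivity)
  rw [mul_pow, mul_pow, inv_pow, Real.sq_sqrt hα.le, ← Real.exp_nat_mul, mul_assoc,
    inv_mul_eq_div, le_div_iff₀ hα]
  have e : ((2:ℕ):ℝ) * (-((1 - α) * π / 2) * |ξ|) = -(1 - α) * (π * |ξ|) := by push_cast; ring
  rw [e]
  exact key

lemma aux_beta (a : ℝ) (ha : 0 < a) : ∃ C : ℝ, 0 < C ∧ ∀ η : ℝ,
    ‖Complex.Gamma (1 + η * Complex.I)‖ ≤ C * ‖Complex.Gamma (1 + a + η * Complex.I)‖ := by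
  set D : ℝ := ∫ x : ℝ in (0:ℝ)..1, ‖(1 - (x : ℂ)) ^ ((a : ℂ) - 1)‖
  have hG : 0 < Real.Gamma a := Real.Gamma_pos_of_pos ha
  have hD : 0 ≤ D := intervalIntegral.integral_nonneg (by norm_num) (fun _ _ => norm_nonneg _)
  refine ⟨D / Real.Gamma a + 1, by positivity, fun η => ?_⟩
  have h := Complex.Gamma_mul_Gamma_eq_betaIntegral (s := 1 + η * Complex.I) (t := a) (by simp) (by simpa)
  have hB : ‖Complex.betaIntegral (1 + η * Complex.I) a‖ ≤ D := by
    unfold Complex.betaIntegral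
    refine (intervalIntegral.norm_integral_le_integral_norm (by norm_num)).trans (le_of_eq ?_)
    apply intervalIntegral.integral_congr_ae
    refine Filter.Eventually.of_forall fun x hx => ?_
    rw [uIoc_of_le (by norm_num)] at hx
    rw [norm_mul, Complex.norm_cpow_eq_rpow_re_of_pos hx.1]
    simp
  have h' := congrArg norm h
  rw [norm_mul, norm_mul, Complex.Gamma_ofReal, Complex.norm_real, Real.norm_eq_abs,
    abs_of_pos hG, show (1 + η * Complex.I + a : ℂ) = 1 + a + η * Complex.I by ring] at h'
  have : ‖Complex.Gamma (1 + η * Complex.I)‖ ≤ D / Real.Gamma a * ‖Complex.Gamma (1 + a + η * Complex.I)‖ := by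
    rw [div_mul_eq_mul_div, le_div_iff₀ hG, h', mul_comm]
    gcongr
  nlinarith [norm_nonneg (Complex.Gamma (1 + a + η * Complex.I))]

/-- decay of the Mellin transform on the two lines. -/
lemma aux_decay (α : ℝ) (hα : 0 < α) (hα1 : α < 1) (c : ℝ) (hc : c = 0 ∨ c = 2) :
    ∃ C : ℝ, 0 ≤ C ∧ ∀ ξ : ℝ, ‖Complex.Gamma (1 + (c + ξ * Complex.I)) /
      Complex.Gamma (1 + α * (c + ξ * Complex.I))‖ ≤ C / (1 + |ξ|) ^ 3 := by
  have hbpos : 0 < (1 - α) * π / 2 := by have := Real.pi_pos; have : 0 < 1 - α := by linarith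
                                         positivity
  obtain ⟨C5, hC5, h5⟩ := aux_exp_decay _ hbpos 5
  have hsq : 0 < Real.sqrt α := Real.sqrt_pos.2 hα
  have base : ∀ ξ : ℝ, ‖Complex.Gamma (1 + ξ * Complex.I)‖ ≤ (Real.sqrt α)⁻¹ *
      (C5 / (1 + |ξ|) ^ 5) * ‖Complex.Gamma (1 + (α * ξ : ℝ) * Complex.I)‖ := by
    intro ξ
    refine (aux_ratio0 α hα hα1 ξ).trans ?_
    gcongr
    exact h5 ξ
  rcases hc with rfl | rfl
  · refine ⟨(Real.sqrt α)⁻¹ * C5, by positivity, fun ξ => ?_⟩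
    have hne : Complex.Gamma (1 + (α * ξ : ℝ) * Complex.I) ≠ 0 :=
      Complex.Gamma_ne_zero_of_re_pos (by simp)
    have e : (1 + α * ((0:ℝ) + ξ * Complex.I) : ℂ) = 1 + (α * ξ : ℝ) * Complex.I := by
      push_cast; ring
    rw [e, norm_div, div_le_iff₀ (norm_pos_iff.2 hne)]
    simp only [Complex.ofReal_zero, zero_add]
    refine (base ξ).trans ?_
    rw [← mul_div_assoc]
    gcongr
    · linarith [abs_nonneg ξ]
    · norm_num
  · obtain ⟨B, hB, hBb⟩ := aux_beta (2 * α) (by positivity)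
    refine ⟨(Real.sqrt α)⁻¹ * C5 * 2 * B, by positivity, fun ξ => ?_⟩
    have hne : Complex.Gamma (1 + (2 * α : ℝ) + (α * ξ : ℝ) * Complex.I) ≠ 0 :=
      Complex.Gamma_ne_zero_of_re_pos (by simp; positivity)
    have e : (1 + α * ((2:ℝ) + ξ * Complex.I) : ℂ) = 1 + (2 * α : ℝ) + (α * ξ : ℝ) * Complex.I := by
      push_cast; ring
    rw [e, norm_div, div_le_iff₀ (norm_pos_iff.2 hne)]
    have e2 : (1 + ((2:ℝ) + ξ * Complex.I) : ℂ) = (1 + ξ * Complex.I + 1) + 1 := by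
      push_cast; ring
    have n1 : (1 + ξ * Complex.I : ℂ) ≠ 0 := by
      intro h; have := congrArg Complex.re h; simp at this
    have n2 : (1 + ξ * Complex.I + 1 : ℂ) ≠ 0 := by
      intro h; have := congrArg Complex.re h; norm_num at this
    rw [e2, Complex.Gamma_add_one _ n2, Complex.Gamma_add_one _ n1, norm_mul, norm_mul]
    have b1 : ‖(1 + ξ * Complex.I : ℂ)‖ ≤ 1 + |ξ| := by
      refine (norm_add_le _ _).trans ?_; simp
    have b2 : ‖(1 + ξ * Complex.I + 1 : ℂ)‖ ≤ 2 * (1 + |ξ|) := by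
      refine (norm_add_le _ _).trans ?_
      simp only [norm_one]; linarith [abs_nonneg ξ]
    have hx : 0 < 1 + |ξ| := by positivity
    calc _ ≤ (2 * (1 + |ξ|)) * ((1 + |ξ|) * ((Real.sqrt α)⁻¹ *
      (C5 / (1 + |ξ|) ^ 5) * (B * ‖Complex.Gamma (1 + (2 * α : ℝ) + (α * ξ : ℝ) * Complex.I)‖))) := by
          gcongr
          refine (base ξ).trans ?_
          gcongr
          exact hBb _
      _ = _ := by field_simp

open FourierTransform in
lemma aux_fourier (g : ℝ → ℂ) (hg : Integrable g) (C : ℝ) (hC : 0 ≤ C)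
    (hdec : ∀ ξ : ℝ, ‖∫ x : ℝ, Complex.exp (ξ * Complex.I * x) * g x‖ ≤ C / (1 + |ξ|) ^ 3) :
    ∃ (G : ℝ → ℂ) (D : ℝ), 0 ≤ D ∧ (∀ᵐ x, g x = G x) ∧ (∀ x, ‖G x‖ ≤ D) ∧
      ∀ x y, ‖G x - G y‖ ≤ D * |x - y| := by
  have hF : ∀ w : ℝ, ‖𝓕 g w‖ ≤ C / (1 + |w|) ^ 3 := by
    intro w
    have h := hdec (-(2 * π) * w)
    rw [Real.fourier_real_eq_integral_exp_smul]
    have e : (∫ v : ℝ, Complex.exp (↑(-2 * π * v * w) * Complex.I) • g v) =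
        ∫ x : ℝ, Complex.exp ((-(2 * π) * w : ℝ) * Complex.I * x) * g x := by
      congr 1; ext v; rw [smul_eq_mul]; congr 2; push_cast; ring
    rw [e]
    refine h.trans ?_
    have : |w| ≤ |-(2 * π) * w| := by
      rw [abs_mul, abs_neg, abs_of_pos Real.two_pi_pos]
      nlinarith [abs_nonneg w, Real.pi_gt_three]
    gcongr
  have hcont : Continuous (𝓕 g) := 
    VectorFourier.fourierIntegral_continuous Real.continuous_fourierChar
      (by fun_prop) hg
  have hFb : ∀ w : ℝ, (1 + |w|) * ‖𝓕 g w‖ ≤ C * (1 / (1 + |w|) ^ 2) := by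
    intro w
    have hw : 0 < 1 + |w| := by positivity
    calc _ ≤ (1 + |w|) * (C / (1 + |w|) ^ 3) := by gcongr; exact hF w
      _ = _ := by field_simp
  have hI1 : Integrable (fun w => (1 + |w|) * ‖𝓕 g w‖) := by
    refine (aux_integrable.const_mul C).mono' (by fun_prop) (Filter.Eventually.of_forall fun w => ?_)
    rw [Real.norm_of_nonneg (by positivity)]
    exact hFb w
  have hI : Integrable (𝓕 g) := by
    refine hI1.mono' (by fun_prop) (Filter.Eventually.of_forall fun w => ?_)
    nlinarith [norm_nonneg (𝓕 g w), abs_nonneg w]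
  set E : ℝ := ∫ w, (1 + |w|) * ‖𝓕 g w‖ with hE
  have hE0 : 0 ≤ E := integral_nonneg fun w => by positivity
  have hGcont : Continuous (𝓕⁻ (𝓕 g)) := by
    have : 𝓕⁻ (𝓕 g) = fun x => 𝓕 (𝓕 g) (-x) := by
      ext x; rw [Real.fourierInv_eq_fourier_neg]
    rw [this]
    exact (VectorFourier.fourierIntegral_continuous Real.continuous_fourierChar
      (by fun_prop) hI : Continuous (𝓕 (𝓕 g))).comp continuous_neg
  refine ⟨𝓕⁻ (𝓕 g), 2 * π * E, by positivity, ?_, ?_, ?_⟩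
  · refine ae_eq_of_integral_contDiff_smul_eq hg.locallyIntegrable hGcont.locallyIntegrable ?_
    intro φ hφ hφc
    set ψ : SchwartzMap ℝ ℂ := HasCompactSupport.toSchwartzMap (f := fun x => (φ x : ℂ))
      (hφc.comp_left (g := ((↑) : ℝ → ℂ)) (by simp)) (Complex.ofRealCLM.contDiff.comp hφ) with hψ
    have hψc : ∀ x, ψ x = φ x := fun x => rfl
    set χ : SchwartzMap ℝ ℂ := 𝓕⁻ ψ with hχ
    have hχψ : 𝓕 χ = ψ := FourierInvPair.fourier_fourierInv_eq ψ
    have hχψ' : 𝓕 (χ : ℝ → ℂ) = ψ := by rw [← SchwartzMap.fourier_coe, hχψ]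
    have s1 := VectorFourier.integral_fourierIntegral_smul_eq_flip (L := innerₗ ℝ) (μ := volume)
      (ν := volume) (f := g) (g := χ) Real.continuous_fourierChar (by fun_prop) hg χ.integrable
    have s2 := VectorFourier.integral_fourierIntegral_smul_eq_flip (L := innerₗ ℝ) (μ := volume)
      (ν := volume) (f := fun x => ψ (-x)) (g := 𝓕 g) Real.continuous_fourierChar (by fun_prop) ψ.integrable.comp_neg hI
    rw [flip_innerₗ] at s1 s2
    change ∫ ξ, 𝓕 g ξ • χ ξ = ∫ x, g x • 𝓕 (χ : ℝ → ℂ) x at s1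
    change ∫ ξ, 𝓕 (fun x => ψ (-x)) ξ • 𝓕 g ξ = ∫ x, ψ (-x) • 𝓕 (𝓕 g) x at s2
    rw [← Real.fourierInv_eq_fourier_comp_neg, ← SchwartzMap.fourierInv_coe] at s2
    have e1 : ∫ x, φ x • g x = ∫ x, g x • 𝓕 (χ : ℝ → ℂ) x := by
      rw [hχψ']; congr 1; ext x; rw [hψc]; simp [mul_comm]
    rw [e1, ← s1]
    have e2 : ∫ x, φ x • 𝓕⁻ (𝓕 g) x = ∫ x, ψ (-x) • 𝓕 (𝓕 g) x := by
      rw [← integral_neg_eq_self (fun x => ψ (-x) • 𝓕 (𝓕 g) x)]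
      congr 1; ext x
      rw [neg_neg, hψc, Real.fourierInv_eq_fourier_neg]; simp
    rw [e2, ← s2]
    congr 1; ext x
    rw [smul_eq_mul, smul_eq_mul, mul_comm]
  · intro x
    rw [Real.fourierInv_eq']
    refine (norm_integral_le_integral_norm _).trans ?_
    have : ∫ w, ‖Complex.exp (↑(2 * π * inner ℝ w x) * Complex.I) • 𝓕 g w‖ ≤ E := by
      refine integral_mono_of_nonneg (Filter.Eventually.of_forall fun w => norm_nonneg _) hI1
        (Filter.Eventually.of_forall fun w => ?_)
      simp only [norm_smul, Complex.norm_exp_ofReal_mul_I]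
      nlinarith [norm_nonneg (𝓕 g w), abs_nonneg w]
    nlinarith [Real.pi_gt_three]
  · intro x y
    rw [Real.fourierInv_eq', Real.fourierInv_eq']
    have hint : ∀ x : ℝ, Integrable fun w => Complex.exp (↑(2 * π * inner ℝ w x) * Complex.I) • 𝓕 g w := by
      intro x
      refine hI.norm.mono' (by fun_prop) (Filter.Eventually.of_forall fun w => ?_)
      simp only [norm_smul, Complex.norm_exp_ofReal_mul_I, one_mul, le_refl]
    rw [← integral_sub (hint x) (hint y)]
    refine (norm_integral_le_integral_norm _).trans ?_
    have e : 2 * π * E * |x - y| = ∫ w, (2 * π * |x - y|) * ((1 + |w|) * ‖𝓕 g w‖) := by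
      rw [integral_const_mul]; ring
    rw [e]
    refine integral_mono_of_nonneg (Filter.Eventually.of_forall fun w => norm_nonneg _)
      (hI1.const_mul _) (Filter.Eventually.of_forall fun w => ?_)
    simp only [← sub_smul, norm_smul]
    have key : ‖Complex.exp (↑(2 * π * inner ℝ w x) * Complex.I) -
        Complex.exp (↑(2 * π * inner ℝ w y) * Complex.I)‖ ≤ 2 * π * |w| * |x - y| := by
      have : Complex.exp (↑(2 * π * inner ℝ w x) * Complex.I) =
        Complex.exp (↑(2 * π * inner ℝ w y) * Complex.I) *
          Complex.exp (Complex.I * (2 * π * w * (x - y) : ℝ)) := by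
        rw [← Complex.exp_add]; congr 1; simp; ring
      rw [this, ← mul_sub_one, norm_mul, Complex.norm_exp_ofReal_mul_I, one_mul]
      refine (Real.norm_exp_I_mul_ofReal_sub_one_le).trans (le_of_eq ?_)
      rw [Real.norm_eq_abs, abs_mul, abs_mul, abs_of_pos Real.two_pi_pos]
    calc _ ≤ (2 * π * |w| * |x - y|) * ‖𝓕 g w‖ := by gcongr
      _ ≤ (2 * π * (1 + |w|) * |x - y|) * ‖𝓕 g w‖ := by gcongr; linarith
      _ = _ := by ring

lemma aux_mgf (α : ℝ) (hα : 0 < α) (hα1 : α < 1) (k : ℝ → ℝ) (hk : ∀ x, 0 ≤ k x)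
    (hint : ∀ c : ℝ, -1 < c → Integrable fun x => Real.exp (c * x) * k x)
    (hmom : ∀ c : ℝ, -1 < c → ∫ x, Real.exp (c * x) * k x =
      Real.Gamma (1 + c) / Real.Gamma (1 + α * c)) (z : ℂ) (hz : -1 < z.re) :
    ∫ x : ℝ, Complex.exp (z * x) * k x = Complex.Gamma (1 + z) / Complex.Gamma (1 + α * z) := by
  have hk0 : Integrable k := by simpa using hint 0 (by norm_num)
  have hm : AEMeasurable (fun x => ENNReal.ofReal (k x)) := hk0.aemeasurable.ennreal_ofReal
  have hlt : ∀ᵐ x : ℝ, ENNReal.ofReal (k x) < ⊤ := Filter.Eventually.of_forall fun x => by simp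
  set μ : Measure ℝ := volume.withDensity (fun x => ENNReal.ofReal (k x)) with hμ
  have hM : ∀ w : ℂ, ProbabilityTheory.complexMGF id μ w = ∫ x : ℝ, Complex.exp (w * x) * k x := by
    intro w
    rw [ProbabilityTheory.complexMGF, hμ, integral_withDensity_eq_integral_toReal_smul₀ hm hlt]
    congr 1; ext x
    rw [ENNReal.toReal_ofReal (hk x)]
    simp [mul_comm]
  have hset : Ioi (-1 : ℝ) ⊆ ProbabilityTheory.integrableExpSet id μ := by
    intro c hc
    simp only [ProbabilityTheory.integrableExpSet, mem_ofPred_eq]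
    rw [hμ, integrable_withDensity_iff_integrable_smul₀' hm hlt]
    refine (hint c hc).congr (Filter.Eventually.of_forall fun x => ?_)
    simp [ENNReal.toReal_ofReal (hk x), mul_comm]
  set U : Set ℂ := {w | -1 < w.re} with hU
  have hUo : IsOpen U := isOpen_lt continuous_const Complex.continuous_re
  have hf : AnalyticOnNhd ℂ (ProbabilityTheory.complexMGF id μ) U := by
    refine ProbabilityTheory.analyticOnNhd_complexMGF.mono ?_
    intro w hw
    exact (interior_maximal hset isOpen_Ioi) hw
  have hre : ∀ w ∈ U, 0 < (1 + α * w : ℂ).re := by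
    intro w hw
    have : -1 < w.re := hw
    simp
    nlinarith
  have hre1 : ∀ w ∈ U, 0 < (1 + w : ℂ).re := by
    intro w hw
    have : -1 < w.re := hw
    simp
    linarith
  have hdG : ∀ s : ℂ, 0 < s.re → DifferentiableAt ℂ Complex.Gamma s := by
    intro s hs
    apply Complex.differentiableAt_Gamma
    intro m h
    rw [h] at hs
    simp at hs
    linarith [(Nat.cast_nonneg m : (0:ℝ) ≤ m)]
  have hg : AnalyticOnNhd ℂ (fun w : ℂ => Complex.Gamma (1 + w) / Complex.Gamma (1 + α * w)) U := by
    apply DifferentiableOn.analyticOnNhd _ hUo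
    intro w hw
    apply DifferentiableAt.differentiableWithinAt
    refine DifferentiableAt.div ?_ ?_ (Complex.Gamma_ne_zero_of_re_pos (hre w hw))
    · exact (hdG _ (hre1 w hw)).comp w (by fun_prop)
    · exact (hdG _ (hre w hw)).comp w (by fun_prop)
  have hUc : IsPreconnected U := (convex_halfSpace_re_gt (-1)).isPreconnected
  have h0 : (0:ℂ) ∈ U := by simp [hU]
  have hreal : ∀ c : ℝ, -1 < c → ProbabilityTheory.complexMGF id μ c =
      Complex.Gamma (1 + c) / Complex.Gamma (1 + α * c) := by
    intro c hc
    rw [hM]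
    have := hmom c hc
    have e : (∫ x : ℝ, Complex.exp (c * x) * k x) = ((∫ x : ℝ, Real.exp (c * x) * k x : ℝ) : ℂ) := by
      rw [← integral_complex_ofReal]; congr 1; ext x; push_cast; rfl
    rw [e, this]
    push_cast [← Complex.Gamma_ofReal]
    rfl
  have hfreq : ∃ᶠ w in nhdsWithin (0:ℂ) {0}ᶜ, ProbabilityTheory.complexMGF id μ w =
      Complex.Gamma (1 + w) / Complex.Gamma (1 + α * w) := by
    have ht : Filter.Tendsto (fun c : ℝ => (c : ℂ)) (nhdsWithin (0:ℝ) {0}ᶜ) (nhdsWithin (0:ℂ) {0}ᶜ) := by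
      apply tendsto_nhdsWithin_of_tendsto_nhds_of_eventually_within
      · exact (Complex.continuous_ofReal.tendsto' 0 0 (by simp)).mono_left nhdsWithin_le_nhds
      · filter_upwards [self_mem_nhdsWithin] with c hc
        simpa using hc
    apply ht.frequently
    apply Filter.Eventually.frequently
    have : ∀ᶠ c : ℝ in nhdsWithin (0:ℝ) {0}ᶜ, -1 < c :=
      nhdsWithin_le_nhds (Ioi_mem_nhds (by norm_num))
    filter_upwards [this] with c hc using hreal c hc
  have := hf.eqOn_of_preconnected_of_frequently_eq hg hUc h0 hfreq (show z ∈ U from hz)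
  rw [← hM]; exact this

lemma aux_line (α : ℝ) (hα : 0 < α) (hα1 : α < 1) (k : ℝ → ℝ) (hk : ∀ x, 0 ≤ k x)
    (hint : ∀ c : ℝ, -1 < c → Integrable fun x => Real.exp (c * x) * k x)
    (hmom : ∀ c : ℝ, -1 < c → ∫ x, Real.exp (c * x) * k x =
      Real.Gamma (1 + c) / Real.Gamma (1 + α * c)) (c : ℝ) (hc : c = 0 ∨ c = 2) :
    ∃ D : ℝ, 0 ≤ D ∧ (∀ᵐ x, |Real.exp (c * x) * k x| ≤ D) ∧
      ∀ y, ∀ᵐ x, |Real.exp (c * (x - y)) * k (x - y) - Real.exp (c * x) * k x| ≤ D * |y| := by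
  obtain ⟨C, hC, hdec⟩ := aux_decay α hα hα1 c hc
  have hc1 : -1 < c := by rcases hc with rfl | rfl <;> norm_num
  obtain ⟨G, D, hD, hae, hb, hL⟩ := aux_fourier (fun x => ((Real.exp (c * x) * k x : ℝ) : ℂ))
    (hint c hc1).ofReal C hC (by
      intro ξ
      have h := aux_mgf α hα hα1 k hk hint hmom (c + ξ * Complex.I) (by simpa using hc1)
      have e : (∫ x : ℝ, Complex.exp (ξ * Complex.I * x) * ((Real.exp (c * x) * k x : ℝ) : ℂ)) =
          ∫ x : ℝ, Complex.exp ((c + ξ * Complex.I) * x) * k x := by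
        congr 1; ext x
        rw [add_mul, Complex.exp_add]; push_cast; ring
      rw [e, h]
      exact hdec ξ)
  refine ⟨D, hD, ?_, fun y => ?_⟩
  · filter_upwards [hae] with x hx
    rw [← Real.norm_eq_abs, ← Complex.norm_real, hx]
    exact hb x
  · have hae2 := (measurePreserving_sub_right volume y).quasiMeasurePreserving.ae hae
    filter_upwards [hae, hae2] with x hx hx2
    rw [← Real.norm_eq_abs, ← Complex.norm_real, Complex.ofReal_sub, hx, hx2]
    refine (hL _ _).trans (le_of_eq ?_)
    simp

lemma aux_kernel (α : ℝ) (hα : 0 < α) (hα1 : α < 1) (k : ℝ → ℝ) (hk : ∀ x, 0 ≤ k x)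
    (hint : ∀ c : ℝ, -1 < c → Integrable fun x => Real.exp (c * x) * k x)
    (hmom : ∀ c : ℝ, -1 < c → ∫ x, Real.exp (c * x) * k x =
      Real.Gamma (1 + c) / Real.Gamma (1 + α * c)) (q : ℝ) (hq : 0 < q) (hq1 : q ≤ 1) :
    ∃ D : ℝ, 0 ≤ D ∧ ∀ y, 0 ≤ y → y ≤ 1 → ∀ᵐ x,
      Real.exp (q * x) * |k (x - y) - k x| ≤ D * y * Real.exp (-q * |x|) := by
  obtain ⟨D0, hD0, -, h0⟩ := aux_line α hα hα1 k hk hint hmom 0 (Or.inl rfl)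
  obtain ⟨D2, hD2, hb2, h2⟩ := aux_line α hα hα1 k hk hint hmom 2 (Or.inr rfl)
  have he : 0 < Real.exp 2 := Real.exp_pos 2
  refine ⟨D0 + 3 * Real.exp 2 * D2, by positivity, fun y hy hy1 => ?_⟩
  filter_upwards [h0 y, hb2, h2 y] with x hx0 hxb hx2
  rw [abs_of_nonneg hy] at hx0 hx2
  simp only [zero_mul, Real.exp_zero, one_mul] at hx0
  rcases le_total x 0 with hx | hx
  · rw [abs_of_nonpos hx, neg_mul_neg, mul_comm]
    gcongr
    nlinarith [mul_nonneg (mul_nonneg he.le hD2) hy]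
  · rw [abs_of_nonneg hx]
    have e1 : k (x - y) - k x = Real.exp (-(2 * x)) * (Real.exp (2 * y) *
        (Real.exp (2 * (x - y)) * k (x - y) - Real.exp (2 * x) * k x) +
        (Real.exp (2 * y) - 1) * (Real.exp (2 * x) * k x)) := by
      have a1 : Real.exp (2 * (x - y)) = Real.exp (2 * x) * Real.exp (-(2 * y)) := by
        rw [← Real.exp_add]; ring_nf
      rw [a1, Real.exp_neg, Real.exp_neg]
      field_simp
      ring
    have b1 : Real.exp (2 * y) ≤ Real.exp 2 := Real.exp_le_exp.2 (by linarith)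
    have b2 : Real.exp (2 * y) - 1 ≤ Real.exp 2 * (2 * y) := by
      have h := Real.add_one_le_exp (-(2 * y))
      have h' : Real.exp (2 * y) * Real.exp (-(2 * y)) = 1 := by rw [← Real.exp_add]; simp
      have h3 := Real.exp_pos (2 * y)
      have : Real.exp (2 * y) - 1 ≤ Real.exp (2 * y) * (2 * y) := by nlinarith
      nlinarith
    have b3 : 0 ≤ Real.exp (2 * y) - 1 := by linarith [Real.one_le_exp (show 0 ≤ 2 * y by linarith)]
    have e2 : |k (x - y) - k x| ≤ Real.exp (-(2 * x)) * (Real.exp 2 * (D2 * y) + Real.exp 2 * (2 * y) * D2) := by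
      rw [e1, abs_mul, abs_of_pos (Real.exp_pos _)]
      gcongr
      refine (abs_add_le _ _).trans ?_
      rw [abs_mul, abs_mul (Real.exp (2 * y) - 1), abs_of_pos (Real.exp_pos _), abs_of_nonneg b3]
      gcongr
    calc _ ≤ Real.exp (q * x) * (Real.exp (-(2 * x)) * (Real.exp 2 * (D2 * y) + Real.exp 2 * (2 * y) * D2)) := by gcongr
      _ = (3 * Real.exp 2 * D2) * y * Real.exp (q * x + -(2 * x)) := by rw [Real.exp_add]; ring
      _ ≤ _ := by
        gcongr
        · linarith
        · nlinarith

lemma aux_cov {E : Type*} [NormedAddCommGroup E] [NormedSpace ℝ E] (f : ℝ → E) :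
    ∫ θ in Set.Ioi (0:ℝ), f θ = ∫ x : ℝ, Real.exp x • f (Real.exp x) := by
  have h := integral_image_eq_integral_abs_deriv_smul (s := Set.univ) (f := Real.exp)
    (f' := Real.exp) MeasurableSet.univ
    (fun x _ => (Real.hasDerivAt_exp x).hasDerivWithinAt) Real.exp_injective.injOn f
  rw [Set.image_univ, Real.range_exp] at h
  simpa using h

/-- Hölder regularity of `S₀(t) = ∫₀^∞ h_α(θ) T(t^α θ) u₀ dθ` for
`u₀ ∈ D(A^q)` with `β/α ≤ q ≤ 1`, `β < α`: the quantitative bound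
`‖S₀(t) - u₀‖ ≤ (C_q Γ(1+q)/Γ(1+αq)) ‖A^q u₀‖ t^{αq}` holds and `S₀` is
`β`-Hölder continuous on `[0,T]`. Here `u₀ = A^{-q} v` (so `A^q u₀ = v`), and
`A^{-q}` is encoded by the operator `Aqinv` with the standard semigroup
estimates as hypotheses. -/
theorem S0_holder_regularity {X : Type*} [NormedAddCommGroup X] [NormedSpace ℝ X]
    [CompleteSpace X]
    (α β q T Cq : ℝ) (hα : 0 < α) (hα1 : α < 1) (hβ : 0 < β) (hβα : β < α)
    (hq1 : β / α ≤ q) (hq2 : q ≤ 1) (hT : 0 < T) (hCq : 0 ≤ Cq)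
    (Tsg : ℝ → X →L[ℝ] X) (hTsg0 : Tsg 0 = ContinuousLinearMap.id ℝ X)
    (hTsgHolder : ∀ η : ℝ, 0 < η → η < 1 → ∃ Cη : ℝ, ∀ x : X, ∀ s t : ℝ,
      0 < s → s < t → ‖Tsg t x - Tsg s x‖ ≤ Cη * (t - s) ^ η * s ^ (-η) * ‖x‖)
    (hαd : ℝ → ℝ) (hαd_pos : ∀ θ ∈ Set.Ioi (0:ℝ), 0 ≤ hαd θ)
    (hmom : ∀ γ : ℝ, -1 < γ →
      ∫ θ in Set.Ioi (0:ℝ), θ ^ γ * hαd θ = Real.Gamma (1 + γ) / Real.Gamma (1 + α * γ))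
    (Aqinv : X →L[ℝ] X)
    (hAq : ∀ x : X, ∀ t : ℝ, 0 < t → ‖Tsg t (Aqinv x) - Aqinv x‖ ≤ Cq * t ^ q * ‖x‖)
    (u₀ v : X) (hu₀ : u₀ = Aqinv v) :
    (∀ t ∈ Set.Icc (0:ℝ) T,
      ‖(∫ θ in Set.Ioi (0:ℝ), hαd θ • Tsg (t ^ α * θ) u₀) - u₀‖ ≤
        Cq * Real.Gamma (1 + q) / Real.Gamma (1 + α * q) * ‖v‖ * t ^ (α * q)) ∧
    (∃ Ch : ℝ, ∀ s ∈ Set.Icc (0:ℝ) T, ∀ t ∈ Set.Icc (0:ℝ) T,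
      ‖(∫ θ in Set.Ioi (0:ℝ), hαd θ • Tsg (t ^ α * θ) u₀) -
          (∫ θ in Set.Ioi (0:ℝ), hαd θ • Tsg (s ^ α * θ) u₀)‖ ≤ Ch * |t - s| ^ β) := by
  have hq0 : 0 < q := lt_of_lt_of_le (by positivity) hq1
  have hβq : β ≤ α * q := by rw [div_le_iff₀ hα] at hq1; linarith
  set k : ℝ → ℝ := fun x => Real.exp x * hαd (Real.exp x) with hkdef
  have hk : ∀ x, 0 ≤ k x := fun x => mul_nonneg (Real.exp_pos x).le (hαd_pos _ (Real.exp_pos x))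
  have hkc : ∀ c : ℝ, (fun x => Real.exp x • ((Real.exp x) ^ c * hαd (Real.exp x))) =
      fun x => Real.exp (c * x) * k x := by
    intro c; ext x
    rw [← Real.exp_mul, mul_comm x c, smul_eq_mul, hkdef]; ring
  have hmomk : ∀ c : ℝ, -1 < c → ∫ x, Real.exp (c * x) * k x =
      Real.Gamma (1 + c) / Real.Gamma (1 + α * c) := by
    intro c hc
    rw [← hmom c hc, aux_cov, hkc]
  have hint : ∀ c : ℝ, -1 < c → Integrable fun x => Real.exp (c * x) * k x := by
    intro c hc
    by_contra hcon
    have h := hmomk c hc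
    rw [integral_undef hcon] at h
    have h1 : 0 < Real.Gamma (1 + c) := Real.Gamma_pos_of_pos (by linarith)
    have h2 : 0 < Real.Gamma (1 + α * c) := Real.Gamma_pos_of_pos (by nlinarith)
    have := div_pos h1 h2
    linarith
  have hk0 : Integrable k := by simpa using hint 0 (by norm_num)
  have hk1 : ∫ x, k x = 1 := by simpa using hmomk 0 (by norm_num)
  obtain ⟨D, hD, hker⟩ := aux_kernel α hα hα1 k hk hint hmomk q hq0 hq2
  -- continuity of the orbit
  have hcontT : ContinuousOn (fun τ => Tsg τ u₀) (Ioi 0) := by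
    obtain ⟨C, hC⟩ := hTsgHolder (1/2) (by norm_num) (by norm_num)
    intro σ hσ
    have hσ : 0 < σ := hσ
    apply ContinuousAt.continuousWithinAt
    rw [ContinuousAt, tendsto_iff_norm_sub_tendsto_zero]
    have hlim : Filter.Tendsto (fun τ : ℝ => |C| * |τ - σ| ^ (1/2 : ℝ) * (σ / 2) ^ (-(1/2) : ℝ) * ‖u₀‖)
        (nhds σ) (nhds 0) := by
      have hc : Continuous (fun τ : ℝ => |C| * |τ - σ| ^ (1/2 : ℝ) * (σ / 2) ^ (-(1/2) : ℝ) * ‖u₀‖) := by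
        have : Continuous (fun τ : ℝ => |τ - σ| ^ (1/2 : ℝ)) :=
          (by fun_prop : Continuous fun τ : ℝ => |τ - σ|).rpow_const (fun _ => Or.inr (by norm_num))
        fun_prop
      exact hc.tendsto' σ 0 (by simp)
    refine squeeze_zero' (Filter.Eventually.of_forall fun τ => norm_nonneg _) ?_ hlim
    filter_upwards [Ioi_mem_nhds (show σ / 2 < σ by linarith)] with τ hτ
    have hτ : σ / 2 < τ := hτ
    have hpw : ∀ r : ℝ, σ / 2 < r → r ^ (-(1/2) : ℝ) ≤ (σ / 2) ^ (-(1/2) : ℝ) := fun r hr =>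
      Real.rpow_le_rpow_of_nonpos (by linarith) hr.le (by norm_num)
    rcases lt_trichotomy τ σ with h | h | h
    · rw [norm_sub_rev, abs_sub_comm, abs_of_pos (sub_pos.2 h)]
      refine (hC u₀ τ σ (by linarith) h).trans ?_
      have : 0 ≤ (σ - τ) ^ (1/2 : ℝ) := Real.rpow_nonneg (by linarith) _
      have h0 : 0 ≤ τ ^ (-(1/2) : ℝ) := Real.rpow_nonneg (by linarith) _
      have := le_abs_self C
      have := hpw τ hτ
      gcongr
    · rw [h]; simp
    · rw [abs_of_pos (sub_pos.2 h)]
      refine (hC u₀ σ τ hσ h).trans ?_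
      have : 0 ≤ (τ - σ) ^ (1/2 : ℝ) := Real.rpow_nonneg (by linarith) _
      have h0 : 0 ≤ σ ^ (-(1/2) : ℝ) := Real.rpow_nonneg (by linarith) _
      have := le_abs_self C
      have := hpw σ (by linarith)
      gcongr
  have hcontE : ∀ a : ℝ, Continuous (fun x => Tsg (Real.exp (a + x)) u₀) := fun a =>
    hcontT.comp_continuous (by fun_prop) (fun x => Real.exp_pos _)
  have hF : ∀ a x : ℝ, ‖Tsg (Real.exp (a + x)) u₀ - u₀‖ ≤
      Cq * ‖v‖ * Real.exp (q * a) * Real.exp (q * x) := by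
    intro a x
    rw [hu₀]
    refine (hAq v _ (Real.exp_pos _)).trans (le_of_eq ?_)
    rw [← Real.exp_mul, show (a + x) * q = q * a + q * x by ring, Real.exp_add]; ring
  -- integrability for weights
  have hFint : ∀ a : ℝ, Integrable fun x => k x • (Tsg (Real.exp (a + x)) u₀ - u₀) := by
    intro a
    refine ((hint q (by linarith)).const_mul (Cq * ‖v‖ * Real.exp (q * a))).mono'
      (hk0.aestronglyMeasurable.smul ((hcontE a).sub continuous_const).aestronglyMeasurable)
      (Filter.Eventually.of_forall fun x => ?_)
    rw [norm_smul, Real.norm_of_nonneg (hk x)]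
    calc _ ≤ k x * (Cq * ‖v‖ * Real.exp (q * a) * Real.exp (q * x)) :=
          mul_le_mul_of_nonneg_left (hF a x) (hk x)
      _ = _ := by ring
  have hTint : ∀ a : ℝ, Integrable fun x => k x • Tsg (Real.exp (a + x)) u₀ := by
    intro a
    have := (hFint a).add (hk0.smul_const u₀)
    refine this.congr (Filter.Eventually.of_forall fun x => ?_)
    simp [smul_sub]
  have hS : ∀ t : ℝ, 0 < t → (∫ θ in Set.Ioi (0:ℝ), hαd θ • Tsg (t ^ α * θ) u₀) =
      u₀ + ∫ x, k x • (Tsg (Real.exp (α * Real.log t + x)) u₀ - u₀) := by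
    intro t ht
    rw [aux_cov]
    have e1 : (fun x => Real.exp x • hαd (Real.exp x) • Tsg (t ^ α * Real.exp x) u₀) =
        fun x => k x • Tsg (Real.exp (α * Real.log t + x)) u₀ := by
      ext x
      rw [smul_smul, Real.exp_add, mul_comm α, ← Real.rpow_def_of_pos ht]
    rw [e1]
    simp only [smul_sub]
    rw [integral_sub (hTint _) (hk0.smul_const u₀), integral_smul_const, hk1, one_smul]
    abel
  have hS0 : (∫ θ in Set.Ioi (0:ℝ), hαd θ • Tsg ((0:ℝ) ^ α * θ) u₀) = u₀ := by
    rw [Real.zero_rpow hα.ne']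
    simp only [zero_mul, hTsg0, ContinuousLinearMap.id_apply]
    rw [integral_smul_const]
    have := hmom 0 (by norm_num)
    simp at this
    rw [this, one_smul]
  have hexpq : ∀ t : ℝ, 0 < t → Real.exp (q * (α * Real.log t)) = t ^ (α * q) := by
    intro t ht
    rw [Real.rpow_def_of_pos ht]; ring_nf
  have hG1 : 0 < Real.Gamma (1 + q) := Real.Gamma_pos_of_pos (by linarith)
  have hG2 : 0 < Real.Gamma (1 + α * q) := Real.Gamma_pos_of_pos (by positivity)
  have part1 : ∀ t ∈ Set.Icc (0:ℝ) T,
      ‖(∫ θ in Set.Ioi (0:ℝ), hαd θ • Tsg (t ^ α * θ) u₀) - u₀‖ ≤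
        Cq * Real.Gamma (1 + q) / Real.Gamma (1 + α * q) * ‖v‖ * t ^ (α * q) := by
    intro t ht
    rcases ht.1.eq_or_lt with h | h
    · rw [← h, hS0, sub_self, norm_zero]
      positivity
    · rw [hS t h, add_sub_cancel_left]
      refine (norm_integral_le_of_norm_le
        ((hint q (by linarith)).const_mul (Cq * ‖v‖ * t ^ (α * q)))
        (Filter.Eventually.of_forall fun x => ?_)).trans (le_of_eq ?_)
      · rw [norm_smul, Real.norm_of_nonneg (hk x), ← hexpq t h]
        calc _ ≤ k x * (Cq * ‖v‖ * Real.exp (q * (α * Real.log t)) * Real.exp (q * x)) :=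
              mul_le_mul_of_nonneg_left (hF _ x) (hk x)
          _ = _ := by ring
      · rw [integral_const_mul, hmomk q (by linarith)]; ring
  refine ⟨part1, ?_⟩
  set K : ℝ := Cq * Real.Gamma (1 + q) / Real.Gamma (1 + α * q) * ‖v‖ with hK
  have hK0 : 0 ≤ K := by positivity
  obtain ⟨C2, hC2, hexp⟩ := aux_exp_decay q hq0 2
  have hEint : Integrable (fun x : ℝ => Real.exp (-q * |x|)) := by
    refine (aux_integrable.const_mul C2).mono' (by fun_prop) (Filter.Eventually.of_forall fun x => ?_)
    rw [Real.norm_of_nonneg (Real.exp_pos _).le, mul_one_div]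
    exact hexp x
  set E : ℝ := ∫ x : ℝ, Real.exp (-q * |x|) with hE
  have hE0 : 0 ≤ E := integral_nonneg fun x => (Real.exp_pos _).le
  set R : ℝ := T ^ (α * q - β) with hR
  have hR0 : 0 ≤ R := Real.rpow_nonneg hT.le _
  have hpow : ∀ t : ℝ, 0 ≤ t → t ≤ T → t ^ (α * q) ≤ R * t ^ β := by
    intro t ht htT
    rcases ht.eq_or_lt with h | h
    · rw [← h, Real.zero_rpow (by positivity)]; positivity
    · rw [show α * q = (α * q - β) + β by ring, Real.rpow_add h]
      gcongr
      exact Real.rpow_le_rpow h.le htT (by linarith)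
  set Ch : ℝ := 2 * K * R * 2 ^ β + Cq * ‖v‖ * R * D * E with hCh
  have main : ∀ s ∈ Set.Icc (0:ℝ) T, ∀ t ∈ Set.Icc (0:ℝ) T, s < t →
      ‖(∫ θ in Set.Ioi (0:ℝ), hαd θ • Tsg (t ^ α * θ) u₀) -
          (∫ θ in Set.Ioi (0:ℝ), hαd θ • Tsg (s ^ α * θ) u₀)‖ ≤ Ch * |t - s| ^ β := by
    intro s hs t ht hst
    rw [abs_of_pos (sub_pos.2 hst)]
    have hts : 0 ≤ (t - s) ^ β := Real.rpow_nonneg (by linarith) _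
    rcases lt_or_ge (2 * s) t with h | h
    · have p1 := part1 s hs
      have p2 := part1 t ht
      have m : s ^ (α * q) ≤ t ^ (α * q) := Real.rpow_le_rpow hs.1 hst.le (by positivity)
      have m2 := hpow t ht.1 ht.2
      have m3 : t ^ β ≤ 2 ^ β * (t - s) ^ β := by
        rw [← Real.mul_rpow (by norm_num) (by linarith)]
        exact Real.rpow_le_rpow ht.1 (by linarith) hβ.le
      rw [← sub_sub_sub_cancel_right _ _ u₀]
      refine (norm_sub_le _ _).trans ?_
      calc _ ≤ K * t ^ (α * q) + K * s ^ (α * q) := add_le_add p2 p1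
        _ ≤ K * t ^ (α * q) + K * t ^ (α * q) := by gcongr
        _ = 2 * K * t ^ (α * q) := by ring
        _ ≤ 2 * K * (R * (2 ^ β * (t - s) ^ β)) := by
            gcongr
            exact m2.trans (by gcongr)
        _ = 2 * K * R * 2 ^ β * (t - s) ^ β := by ring
        _ ≤ _ := by
            gcongr
            rw [hCh]
            linarith [show 0 ≤ Cq * ‖v‖ * R * D * E by positivity]
    · have hs0 : 0 < s := by linarith
      have ht0 : 0 < t := by linarith
      set b := α * Real.log s with hb
      set y := α * Real.log t - b with hy
      have hy0 : 0 ≤ y := by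
        have := Real.log_le_log hs0 hst.le
        rw [hy, hb, ← mul_sub]; exact mul_nonneg hα.le (by linarith)
      have hr : 0 ≤ (t - s) / s := div_nonneg (by linarith) hs0.le
      have hyr : y ≤ (t - s) / s := by
        have h1 := Real.log_le_sub_one_of_pos (show 0 < t / s by positivity)
        rw [Real.log_div ht0.ne' hs0.ne'] at h1
        have h2 : t / s - 1 = (t - s) / s := by field_simp
        rw [h2] at h1
        rw [hy, hb, ← mul_sub]
        nlinarith
      have hr1 : (t - s) / s ≤ 1 := by rw [div_le_one hs0]; linarith
      have hyβ : y ≤ ((t - s) / s) ^ β := by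
        refine hyr.trans ?_
        have := Real.rpow_le_rpow_of_exponent_ge' hr hr1 hβ.le (by linarith : β ≤ 1)
        simpa using this
      have hF2 : Integrable fun x => k (x - y) • (Tsg (Real.exp (b + x)) u₀ - u₀) := by
        have := (hFint (α * Real.log t)).comp_sub_right y
        refine this.congr (Filter.Eventually.of_forall fun x => ?_)
        simp only [hy]; ring_nf
      have eqn : (∫ x, k x • (Tsg (Real.exp (α * Real.log t + x)) u₀ - u₀)) =
          ∫ x, k (x - y) • (Tsg (Real.exp (b + x)) u₀ - u₀) := by
        rw [← integral_sub_right_eq_self _ y]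
        congr 1; ext x
        rw [show α * Real.log t + (x - y) = b + x by rw [hy]; ring]
      rw [hS t ht0, hS s hs0, add_sub_add_left_eq_sub, eqn, ← integral_sub hF2 (hFint b)]
      have hsm := hpow s hs.1 hs.2
      refine (norm_integral_le_of_norm_le
        (hEint.const_mul (Cq * ‖v‖ * s ^ (α * q) * (D * y))) ?_).trans ?_
      · filter_upwards [hker y hy0 (hyr.trans hr1)] with x hx
        rw [← sub_smul, norm_smul, Real.norm_eq_abs]
        calc _ ≤ |k (x - y) - k x| * (Cq * ‖v‖ * Real.exp (q * b) * Real.exp (q * x)) := by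
              gcongr; exact hF b x
          _ = Cq * ‖v‖ * s ^ (α * q) * (Real.exp (q * x) * |k (x - y) - k x|) := by
              rw [hb, hexpq s hs0]; ring
          _ ≤ Cq * ‖v‖ * s ^ (α * q) * (D * y * Real.exp (-q * |x|)) := by gcongr
          _ = _ := by ring
      · rw [integral_const_mul]
        calc _ ≤ Cq * ‖v‖ * (R * s ^ β) * (D * ((t - s) / s) ^ β) * E := by gcongr
          _ = Cq * ‖v‖ * R * D * E * (s ^ β * ((t - s) / s) ^ β) := by ring
          _ = Cq * ‖v‖ * R * D * E * (t - s) ^ β := by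
              rw [← Real.mul_rpow hs0.le hr, mul_div_cancel₀ _ hs0.ne']
          _ ≤ _ := by
            gcongr
            rw [hCh]
            linarith [show 0 ≤ 2 * K * R * 2 ^ β by positivity]
  refine ⟨Ch, fun s hs t ht => ?_⟩
  rcases lt_trichotomy s t with h | h | h
  · exact main s hs t ht h
  · rw [h]; simp [Real.zero_rpow hβ.ne']
  · rw [norm_sub_rev, abs_sub_comm]
    exact main t ht s hs h
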